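/- Consider the classical Curie–Weiss model with external field, i.e. ν = δ_h for some h ≠ 0 (so all local fields equal h), and let m be the unique solution of x = tanh(β(x + h)) with sgn(m) = sgn(h). Then m is the unique global minimum of G(x) = (β/2)x² − ln cosh(β(x+h)), m is of type 1 with strength β − β²(1 − m²), and for every β > 0 and every α with 1/2 < α < 1, the sequence of laws of (S_n − n m)/n^α under P_{n,β}^h satisfies a moderate deviations principle with speed n^{2α−1} and rate function I(x) = x²/(2σ²), where σ² = (1 − m²)/(1 − β(1 − m²)). -/

import Mathlib

open MeasureTheory ProbabilityTheory Real Filter Topology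
open scoped ENNReal NNReal

noncomputable section

/-- The value of a spin encoded as a Boolean. -/
def spin (b : Bool) : ℝ := if b then 1 else -1

/-- Total magnetization of a configuration. -/
def mag {n : ℕ} (σ : Fin n → Bool) : ℝ := ∑ i, spin (σ i)

/-- Gibbs weight of a configuration in the random field Curie-Weiss model. -/
def gibbsWeight (β : ℝ) (h : ℕ → ℝ) (n : ℕ) (σ : Fin n → Bool) : ℝ :=
  Real.exp (β / (2 * n) * (mag σ) ^ 2 + β * ∑ i : Fin n, h i * spin (σ i))

/-- The random field Curie-Weiss Gibbs measure on configurations. -/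
def gibbsMeasure (β : ℝ) (h : ℕ → ℝ) (n : ℕ) : Measure (Fin n → Bool) :=
  (ENNReal.ofReal (∑ σ : Fin n → Bool, gibbsWeight β h n σ))⁻¹ •
    ∑ σ : Fin n → Bool, ENNReal.ofReal (gibbsWeight β h n σ) • Measure.dirac σ

/-- `μ` is the infinite product of `ν` over `ℕ` (characterised by finite marginals). -/
def IsProductMeasure (ν : Measure ℝ) (μ : Measure (ℕ → ℝ)) : Prop :=
  ∀ n : ℕ, μ.map (fun h (i : Fin n) => h (i : ℕ)) = Measure.pi fun _ : Fin n => ν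

/-- extended logarithm, `elog 0 = ⊥`, `elog ⊤ = ⊤`. -/
def elog (x : ℝ≥0∞) : EReal :=
  if x = 0 then ⊥ else if x = ⊤ then ⊤ else ((Real.log x.toReal : ℝ) : EReal)

/-- A sequence of measures satisfies a large deviations principle with given speed and
rate function. -/
def HasLDP (P : ℕ → Measure ℝ) (speed : ℕ → ℝ) (I : ℝ → ℝ≥0∞) : Prop :=
  LowerSemicontinuous I ∧ (∀ c : ℝ, IsCompact {x : ℝ | I x ≤ ENNReal.ofReal c}) ∧
    ∀ C : Set ℝ, MeasurableSet C →
      -(⨅ x ∈ interior C, (I x : EReal)) ≤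
          liminf (fun n => ((((speed n)⁻¹ : ℝ) : EReal)) * elog (P n C)) atTop ∧
        limsup (fun n => ((((speed n)⁻¹ : ℝ) : EReal)) * elog (P n C)) atTop ≤
          -(⨅ x ∈ closure C, (I x : EReal))

/-- The function `G` of the random field Curie-Weiss model. -/
def G (β : ℝ) (ν : Measure ℝ) (x : ℝ) : ℝ :=
  β / 2 * x ^ 2 - ∫ h, Real.log (Real.cosh (β * (x + h))) ∂ν

/-- The finite-volume function `G_n^h`. -/
def Gn (β : ℝ) (h : ℕ → ℝ) (n : ℕ) (x : ℝ) : ℝ :=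
  β / 2 * x ^ 2 - (1 / n) * ∑ i : Fin n, Real.log (Real.cosh (β * (x + h i)))

/-- `m` is a (local or global) minimum of `G` of type `k` and strength `l`. -/
def IsMinOfType (β : ℝ) (ν : Measure ℝ) (m : ℝ) (k : ℕ) (l : ℝ) : Prop :=
  1 ≤ k ∧ 0 < l ∧ (∀ i : ℕ, 1 ≤ i → i ≤ 2 * k - 1 → iteratedDeriv i (G β ν) m = 0) ∧
    iteratedDeriv (2 * k) (G β ν) m = l

/-- The height of a minimum `m` of `G`. -/
def height (β : ℝ) (ν : Measure ℝ) (m : ℝ) : ℝ := G β ν m - ⨅ w, G β ν w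

/-- The broadness of a minimum `m` of `G`. -/
def broadness (β : ℝ) (ν : Measure ℝ) (m : ℝ) : ℝ :=
  sInf ((fun y => |y - m|) '' {y | G β ν y < G β ν m})

/-- The moderate deviations rate function. -/
def mdpRate (β l : ℝ) (k : ℕ) (x : ℝ) : ℝ≥0∞ :=
  if k = 1 then ENNReal.ofReal (x ^ 2 / (2 * (l⁻¹ - β⁻¹)))
  else ENNReal.ofReal (l * x ^ (2 * k) / (Nat.factorial (2 * k)))

/-- The polynomial `P_{2k}`. -/
def P2k (l : ℝ) (k : ℕ) (s : ℝ) : ℝ :=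
  l / (2 * (Nat.factorial (2 * k))) * s ^ (2 * k) - ∑ i ∈ Finset.Icc 1 (2 * k - 1), |s| ^ i



lemma cw_hasDerivAt_tanh (x : ℝ) : HasDerivAt Real.tanh (1 - Real.tanh x ^ 2) x := by
  have h := (Real.hasDerivAt_sinh x).div (Real.hasDerivAt_cosh x) (Real.cosh_pos x).ne'
  have e : Real.tanh = Real.sinh / Real.cosh := by
    funext y; simp [Real.tanh_eq_sinh_div_cosh]
  rw [e]
  refine h.congr_deriv ?_
  have := (Real.cosh_pos x).ne'
  simp only [Pi.div_apply]
  field_simp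

lemma cw_tanh_strictMono : StrictMono Real.tanh := by
  apply strictMono_of_deriv_pos
  intro x
  rw [(cw_hasDerivAt_tanh x).deriv]
  have := Real.tanh_sq_lt_one x
  linarith

def cwg (β h x : ℝ) : ℝ := β / 2 * x ^ 2 - Real.log (Real.cosh (β * (x + h)))

lemma cw_G_eq (β h : ℝ) : G β (Measure.dirac h) = cwg β h := by
  funext x
  simp [G, cwg]

lemma cwg_hasDerivAt (β h x : ℝ) :
    HasDerivAt (cwg β h) (β * (x - Real.tanh (β * (x + h)))) x := by
  have h1 : HasDerivAt (fun x : ℝ => β * (x + h)) β x := by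
    simpa using ((hasDerivAt_id x).add_const h).const_mul β
  have h2 := (h1.cosh).log (Real.cosh_pos _).ne'
  have h3 := ((hasDerivAt_pow 2 x).const_mul (β / 2)).sub h2
  refine h3.congr_deriv ?_
  rw [Real.tanh_eq_sinh_div_cosh]
  push_cast
  ring

lemma cwf_hasDerivAt (β h x : ℝ) :
    HasDerivAt (fun x => Real.tanh (β * (x + h)) - x)
      (β * (1 - Real.tanh (β * (x + h)) ^ 2) - 1) x := by
  have h1 : HasDerivAt (fun x : ℝ => β * (x + h)) β x := by
    simpa using ((hasDerivAt_id x).add_const h).const_mul β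
  have h2 := ((cw_hasDerivAt_tanh (β * (x + h))).comp x h1).sub (hasDerivAt_id x)
  refine h2.congr_deriv ?_
  ring

lemma cwg_deriv2 (β h x : ℝ) :
    deriv (deriv (cwg β h)) x = β - β ^ 2 * (1 - Real.tanh (β * (x + h)) ^ 2) := by
  have e : deriv (cwg β h) = fun x => -β * (Real.tanh (β * (x + h)) - x) := by
    funext y
    rw [(cwg_hasDerivAt β h y).deriv]; ring
  rw [e, ((cwf_hasDerivAt β h x).const_mul (-β)).deriv]
  ring

lemma cw_pos (β h m : ℝ) (hβ : 0 < β) (hh : 0 < h) (hm0 : 0 < m)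
    (hm : m = Real.tanh (β * (m + h))) :
    (∀ x, x ≠ m → cwg β h m < cwg β h x) ∧ β * (1 - m ^ 2) < 1 := by
  set f : ℝ → ℝ := fun x => Real.tanh (β * (x + h)) - x with hf
  set f' : ℝ → ℝ := fun x => β * (1 - Real.tanh (β * (x + h)) ^ 2) - 1 with hf'
  have hd : ∀ x, HasDerivAt f (f' x) x := cwf_hasDerivAt β h
  have hc : Continuous f := continuous_iff_continuousAt.2 fun x => (hd x).continuousAt
  have hanti : ∀ x y, 0 ≤ x → x < y → f' y < f' x := by
    intro x y hx hxy
    have h1 : 0 < Real.tanh (β * (x + h)) := by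
      rw [← Real.tanh_zero]
      exact cw_tanh_strictMono (by positivity)
    have h2 : Real.tanh (β * (x + h)) < Real.tanh (β * (y + h)) :=
      cw_tanh_strictMono (by gcongr)
    simp only [hf']
    have : Real.tanh (β * (x + h)) ^ 2 < Real.tanh (β * (y + h)) ^ 2 := by gcongr
    nlinarith
  have f0 : 0 < f 0 := by
    simp only [hf, sub_zero, zero_add]
    rw [← Real.tanh_zero]
    exact cw_tanh_strictMono (by positivity)
  have fm : f m = 0 := by simp only [hf]; linarith
  have mvt : ∀ a b, a < b → ∃ c ∈ Set.Ioo a b, f b - f a = f' c * (b - a) := by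
    intro a b hab
    obtain ⟨c, hc1, hc2⟩ := exists_hasDerivAt_eq_slope f f' hab hc.continuousOn (fun x _ => hd x)
    refine ⟨c, hc1, ?_⟩
    rw [hc2]
    have : b - a ≠ 0 := by linarith
    field_simp
  have fm' : f' m < 0 := by
    obtain ⟨c, hc1, hc2⟩ := mvt 0 m hm0
    have : f' c < 0 := by
      by_contra hcon
      push Not at hcon
      nlinarith
    exact (hanti c m hc1.1.le hc1.2).trans this
  have fgt : ∀ x, m < x → f x < 0 := by
    intro x hx
    obtain ⟨c, hc1, hc2⟩ := mvt m x hx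
    have : f' c < 0 := (hanti m c hm0.le hc1.1).trans fm'
    nlinarith
  have flt : ∀ x, 0 < x → x < m → 0 < f x := by
    intro x hx0 hx
    by_contra hcon
    push Not at hcon
    obtain ⟨c, hc1, hc2⟩ := mvt 0 x hx0
    obtain ⟨d, hd1, hd2⟩ := mvt x m hx
    have h1 : f' c < 0 := by
      by_contra hcon
      push Not at hcon
      nlinarith
    have h2 := hanti c d hc1.1.le (hc1.2.trans hd1.1)
    nlinarith [hd1.1, hd1.2]
  have hgc : Continuous (cwg β h) :=
    continuous_iff_continuousAt.2 fun x => (cwg_hasDerivAt β h x).continuousAt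
  have gd : ∀ x, deriv (cwg β h) x = -(β * f x) := by
    intro x
    rw [(cwg_hasDerivAt β h x).deriv]
    simp only [hf]; ring
  have ganti : StrictAntiOn (cwg β h) (Set.Icc 0 m) := by
    apply strictAntiOn_of_deriv_neg (convex_Icc 0 m) hgc.continuousOn
    intro x hx
    rw [interior_Icc] at hx
    rw [gd]
    have := mul_pos hβ (flt x hx.1 hx.2)
    linarith
  have gmono : StrictMonoOn (cwg β h) (Set.Ici m) := by
    apply strictMonoOn_of_deriv_pos (convex_Ici m) hgc.continuousOn
    intro x hx
    rw [interior_Ici] at hx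
    rw [gd]
    have := mul_pos hβ (neg_pos.2 (fgt x hx))
    linarith
  have gnn : ∀ x, 0 ≤ x → x ≠ m → cwg β h m < cwg β h x := by
    intro x hx0 hx
    rcases lt_or_gt_of_ne hx with h1 | h1
    · exact ganti ⟨hx0, h1.le⟩ ⟨hm0.le, le_rfl⟩ h1
    · exact gmono (Set.mem_Ici.2 le_rfl) (Set.mem_Ici.2 h1.le) h1
  constructor
  · intro x hx
    rcases le_or_gt 0 x with h0 | h0
    · exact gnn x h0 hx
    · have h1 : cwg β h m ≤ cwg β h (-x) := by
        by_cases hxm : -x = m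
        · rw [hxm]
        · exact (gnn (-x) (by linarith) hxm).le
      have h2 : cwg β h (-x) < cwg β h x := by
        have : Real.cosh (β * (x + h)) < Real.cosh (β * (-x + h)) := by
          rw [Real.cosh_lt_cosh, abs_mul, abs_mul]
          have : |x + h| < |-x + h| := by
            rw [abs_of_pos (show 0 < -x + h by linarith)]
            apply abs_lt.2; constructor <;> linarith
          have hb : 0 < |β| := abs_pos.2 hβ.ne'
          gcongr
        have := Real.log_lt_log (Real.cosh_pos _) this
        simp only [cwg]
        rw [neg_sq]
        linarith
      linarith
  · have : f' m = β * (1 - m ^ 2) - 1 := by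
      simp only [hf']; rw [← hm]
    linarith

lemma cwg_neg (β h x : ℝ) : cwg β (-h) (-x) = cwg β h x := by
  simp only [cwg]
  rw [show β * (-x + -h) = -(β * (x + h)) by ring, Real.cosh_neg, neg_sq]

lemma cw_all (β h m : ℝ) (hβ : 0 < β) (hh : h ≠ 0) (hm : m = Real.tanh (β * (m + h)))
    (hs : Real.sign m = Real.sign h) :
    (∀ x, x ≠ m → cwg β h m < cwg β h x) ∧ β * (1 - m ^ 2) < 1 := by
  rcases lt_or_gt_of_ne hh with h0 | h0
  · have hm0 : m < 0 := by
      rw [Real.sign_of_neg h0] at hs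
      by_contra hcon
      push Not at hcon
      rcases hcon.eq_or_lt with h1 | h1
      · rw [← h1, Real.sign_zero] at hs; norm_num at hs
      · rw [Real.sign_of_pos h1] at hs; norm_num at hs
    obtain ⟨h1, h2⟩ := cw_pos β (-h) (-m) hβ (by linarith) (by linarith) (by
      rw [show β * (-m + -h) = -(β * (m + h)) by ring, Real.tanh_neg, ← hm])
    refine ⟨fun x hx => ?_, by simpa using h2⟩
    have := h1 (-x) (by simpa using hx)
    rwa [cwg_neg, cwg_neg] at this
  · have hm0 : 0 < m := by
      rw [Real.sign_of_pos h0] at hs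
      by_contra hcon
      push Not at hcon
      rcases hcon.eq_or_lt with h1 | h1
      · rw [h1, Real.sign_zero] at hs; norm_num at hs
      · rw [Real.sign_of_neg h1] at hs; norm_num at hs
    exact cw_pos β h m hβ h0 hm0 hm

lemma cw_minType (β h m : ℝ) (hβ : 0 < β) (hm : m = Real.tanh (β * (m + h)))
    (h1 : β * (1 - m ^ 2) < 1) :
    IsMinOfType β (Measure.dirac h) m 1 (β - β ^ 2 * (1 - m ^ 2)) := by
  refine ⟨le_rfl, by nlinarith, ?_, ?_⟩
  · intro i hi1 hi2
    have : i = 1 := by omega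
    subst this
    rw [cw_G_eq, iteratedDeriv_one, (cwg_hasDerivAt β h m).deriv, ← hm]
    simp
  · rw [cw_G_eq, iteratedDeriv_succ, iteratedDeriv_one, cwg_deriv2, ← hm]

/-! combinatorics -/

lemma cw_fact_mode (k j : ℕ) : k.factorial * k ^ j ≤ j.factorial * k ^ k := by
  rcases le_total k j with h | h
  · have h1 := Nat.factorial_mul_pow_sub_le_factorial h
    calc k.factorial * k ^ j = (k.factorial * k ^ (j - k)) * k ^ k := by
          rw [mul_assoc, ← pow_add, Nat.sub_add_cancel h]
      _ ≤ _ := by gcongr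
  · have h1 : k.factorial ≤ j.factorial * k ^ (k - j) := by
      rw [← Nat.factorial_mul_descFactorial (Nat.sub_le k j), Nat.sub_sub_self h]
      gcongr
      exact Nat.descFactorial_le_pow _ _
    calc k.factorial * k ^ j ≤ (j.factorial * k ^ (k - j)) * k ^ j := by gcongr
      _ = _ := by rw [mul_assoc, ← pow_add, Nat.sub_add_cancel h]

lemma cw_choose_mode (n k j : ℕ) (hk : k ≤ n) (hj : j ≤ n) :
    n.choose j * (k ^ j * (n - k) ^ (n - j)) ≤ n.choose k * (k ^ k * (n - k) ^ (n - k)) := by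
  have h1 := cw_fact_mode k j
  have h2 := cw_fact_mode (n - k) (n - j)
  have ek := Nat.choose_mul_factorial_mul_factorial hk
  have ej := Nat.choose_mul_factorial_mul_factorial hj
  have p : 0 < j.factorial * (n - j).factorial * (k.factorial * (n - k).factorial) := by positivity
  refine Nat.le_of_mul_le_mul_left ?_ p
  calc j.factorial * (n - j).factorial * (k.factorial * (n - k).factorial) *
        (n.choose j * (k ^ j * (n - k) ^ (n - j)))
      = (n.choose j * j.factorial * (n - j).factorial) *
        ((k.factorial * k ^ j) * ((n - k).factorial * (n - k) ^ (n - j))) := by ring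
    _ = n.factorial *
        ((k.factorial * k ^ j) * ((n - k).factorial * (n - k) ^ (n - j))) := by rw [ej]
    _ ≤ n.factorial * ((j.factorial * k ^ k) * ((n - j).factorial * (n - k) ^ (n - k))) := by
        gcongr
    _ = (n.choose k * k.factorial * (n - k).factorial) *
       ((j.factorial * k ^ k) * ((n - j).factorial * (n - k) ^ (n - k))) := by rw [ek]
    _ = _ := by ring

lemma cw_binom_sum (n k : ℕ) (hk : k ≤ n) :
    n ^ n = ∑ j ∈ Finset.range (n + 1), n.choose j * (k ^ j * (n - k) ^ (n - j)) := by
  have h : (k + (n - k)) ^ n = n ^ n := by rw [Nat.add_sub_cancel' hk]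
  rw [← h, add_pow]
  refine Finset.sum_congr rfl fun j _ => ?_
  push_cast
  ring

lemma cw_choose_le (n k : ℕ) (hk : k ≤ n) :
    n.choose k * (k ^ k * (n - k) ^ (n - k)) ≤ n ^ n := by
  rw [cw_binom_sum n k hk]
  exact Finset.single_le_sum (f := fun j => n.choose j * (k ^ j * (n - k) ^ (n - j)))
    (fun _ _ => Nat.zero_le _) (Finset.mem_range.2 (by omega))

lemma cw_le_choose (n k : ℕ) (hk : k ≤ n) :
    n ^ n ≤ (n + 1) * (n.choose k * (k ^ k * (n - k) ^ (n - k))) := by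
  rw [cw_binom_sum n k hk]
  refine (Finset.sum_le_card_nsmul _ _ _ fun j hj =>
    cw_choose_mode n k j hk (by have := Finset.mem_range.1 hj; omega)).trans ?_
  simp

/-- relative entropy -/
def cwD (m y : ℝ) : ℝ :=
  (1 + y) / 2 * Real.log ((1 + y) / (1 + m)) + (1 - y) / 2 * Real.log ((1 - y) / (1 - m))

lemma cw_xlogx (x c : ℝ) (hx : 0 ≤ x) (hc : 0 < c) : x - c ≤ x * Real.log (x / c) := by
  rcases hx.eq_or_lt with h | h
  · rw [← h]; simp; exact hc.le
  · have h1 := Real.log_le_sub_one_of_pos (show 0 < c / x by positivity)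
    have h2 : Real.log (x / c) = - Real.log (c / x) := by
      rw [← Real.log_inv, inv_div]
    rw [h2]
    have h3 : x * Real.log (c / x) ≤ x * (c / x - 1) := by gcongr
    have h4 : x * (c / x - 1) = c - x := by field_simp
    linarith

lemma cw_xlog_split (x P W s : ℝ) (hP : 0 < P) (hW : 0 < W) :
    x * Real.log (x / (P * Real.exp s / W)) = x * Real.log (x / P) - x * s + x * Real.log W := by
  by_cases h : x = 0
  · simp [h]
  · have : x / (P * Real.exp s / W) = x / P * W / Real.exp s := by
      have := (Real.exp_pos s).ne'
      field_simp
    rw [this, Real.log_div (by positivity) (Real.exp_pos s).ne', Real.log_mul (by positivity) hW.ne',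
      Real.log_exp]
    ring

lemma cw_DV (m y s : ℝ) (hm : |m| < 1) (hy : |y| ≤ 1) :
    s * y - Real.log ((1 + m) / 2 * Real.exp s + (1 - m) / 2 * Real.exp (-s)) ≤ cwD m y := by
  obtain ⟨m1, m2⟩ := abs_lt.1 hm
  obtain ⟨y1, y2⟩ := abs_le.1 hy
  set W := (1 + m) / 2 * Real.exp s + (1 - m) / 2 * Real.exp (-s) with hW
  have p1 : 0 < (1 + m) / 2 := by linarith
  have p2 : 0 < (1 - m) / 2 := by linarith
  have Wp : 0 < W := by positivity
  have a1 := cw_xlogx ((1 + y) / 2) ((1 + m) / 2 * Real.exp s / W) (by linarith) (by positivity)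
  have a2 := cw_xlogx ((1 - y) / 2) ((1 - m) / 2 * Real.exp (-s) / W) (by linarith) (by positivity)
  rw [cw_xlog_split _ _ _ _ p1 Wp] at a1
  rw [cw_xlog_split _ _ _ _ p2 Wp] at a2
  have e1 : (1 + y) / 2 / ((1 + m) / 2) = (1 + y) / (1 + m) := by field_simp
  have e2 : (1 - y) / 2 / ((1 - m) / 2) = (1 - y) / (1 - m) := by field_simp
  rw [e1] at a1
  rw [e2] at a2
  have e3 : (1 + m) / 2 * Real.exp s / W + (1 - m) / 2 * Real.exp (-s) / W = 1 := by
    rw [← add_div, ← hW, div_self Wp.ne']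
  simp only [cwD]
  linarith

lemma cw_F_ge (β h m y : ℝ) (hm : m = Real.tanh (β * (m + h))) (hy : |y| ≤ 1) :
    cwg β h y - cwg β h m ≤ cwD m y - β / 2 * (y - m) ^ 2 := by
  have hm1 : |m| < 1 := by rw [hm]; exact Real.abs_tanh_lt_one _
  have h1 := cw_DV m y (β * (y - m)) hm1 hy
  set T := β * (m + h) with hT
  have e : (1 + m) / 2 * Real.exp (β * (y - m)) + (1 - m) / 2 * Real.exp (-(β * (y - m)))
      = Real.cosh (β * (y + h)) / Real.cosh T := by
    have e1 : β * (y + h) = T + β * (y - m) := by rw [hT]; ring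
    have := (Real.cosh_pos T).ne'
    generalize β * (y - m) = u at e1 ⊢
    rw [e1, Real.cosh_add, hm, Real.tanh_eq_sinh_div_cosh, ← Real.cosh_add_sinh u,
      ← Real.cosh_sub_sinh u]
    field_simp
    ring
  rw [e, Real.log_div (Real.cosh_pos _).ne' (Real.cosh_pos _).ne'] at h1
  simp only [cwg]
  rw [← hT]
  nlinarith

lemma cw_phi (w : ℝ) (hw : |w| ≤ 1 / 2) :
    |(1 + w) * Real.log (1 + w) - w - w ^ 2 / 2| ≤ 4 * |w| ^ 3 := by
  have h1 := Real.abs_log_sub_add_sum_range_le (x := -w) (by rw [abs_neg]; linarith) 2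
  simp only [Finset.sum_range_succ, Finset.sum_range_zero, abs_neg, sub_neg_eq_add] at h1
  norm_num at h1
  have h2 : |w| ^ 3 / (1 - |w|) ≤ 2 * |w| ^ 3 := by
    rw [div_le_iff₀ (by linarith)]
    nlinarith [pow_nonneg (abs_nonneg w) 3]
  have e : (1 + w) * Real.log (1 + w) - w - w ^ 2 / 2 =
      (1 + w) * (-w + w ^ 2 / 2 + Real.log (1 + w)) - w ^ 3 / 2 := by ring
  rw [e]
  refine (abs_sub _ _).trans ?_
  rw [abs_mul, abs_div, abs_pow, abs_two]
  have h3 : |1 + w| ≤ 3 / 2 := by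
    refine (abs_add_le _ _).trans ?_
    rw [abs_one]; linarith
  have h4 : |1 + w| * |-w + w ^ 2 / 2 + Real.log (1 + w)| ≤ 3 / 2 * (2 * |w| ^ 3) := by
    gcongr
    linarith
  linarith [pow_nonneg (abs_nonneg w) 3]

lemma cw_local (m : ℝ) (hm : |m| < 1) : ∃ M > 0, ∃ r > 0, ∀ y, |y - m| < r →
    |cwD m y - (y - m) ^ 2 / (2 * (1 - m ^ 2))| ≤ M * |y - m| ^ 3 := by
  obtain ⟨m1, m2⟩ := abs_lt.1 hm
  have p1 : 0 < 1 + m := by linarith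
  have p2 : 0 < 1 - m := by linarith
  refine ⟨2 / (1 + m) ^ 2 + 2 / (1 - m) ^ 2, by positivity, min ((1 + m) / 2) ((1 - m) / 2),
    by positivity, fun y hy => ?_⟩
  obtain ⟨r1, r2⟩ := lt_min_iff.1 hy
  have h1 := cw_phi ((y - m) / (1 + m)) (by
    rw [abs_div, abs_of_pos p1, div_le_iff₀ p1]; linarith)
  have h2 := cw_phi (-((y - m) / (1 - m))) (by
    rw [abs_neg, abs_div, abs_of_pos p2, div_le_iff₀ p2]; linarith)
  have e1 : 1 + (y - m) / (1 + m) = (1 + y) / (1 + m) := by field_simp; ring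
  have e2 : 1 + -((y - m) / (1 - m)) = (1 - y) / (1 - m) := by field_simp; ring
  rw [e1, abs_div, abs_of_pos p1] at h1
  rw [e2, abs_neg, abs_div, abs_of_pos p2] at h2
  have e : cwD m y - (y - m) ^ 2 / (2 * (1 - m ^ 2)) =
    (1 + m) / 2 * ((1 + y) / (1 + m) * Real.log ((1 + y) / (1 + m)) - (y - m) / (1 + m)
      - ((y - m) / (1 + m)) ^ 2 / 2) +
    (1 - m) / 2 * ((1 - y) / (1 - m) * Real.log ((1 - y) / (1 - m)) - -((y - m) / (1 - m))
      - (-((y - m) / (1 - m))) ^ 2 / 2) := by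
    have : 1 - m ^ 2 = (1 + m) * (1 - m) := by ring
    rw [this]
    simp only [cwD]
    field_simp
    ring
  rw [e]
  refine (abs_add_le _ _).trans ?_
  rw [abs_mul, abs_mul, abs_of_pos (show 0 < (1 + m) / 2 by linarith),
    abs_of_pos (show 0 < (1 - m) / 2 by linarith)]
  calc _ ≤ (1 + m) / 2 * (4 * (|y - m| / (1 + m)) ^ 3) +
        (1 - m) / 2 * (4 * (|y - m| / (1 - m)) ^ 3) := by gcongr
    _ = _ := by field_simp; ring

/-! the weights -/

def cwb (m : ℝ) (n k : ℕ) : ℝ := ((1 + m) / 2) ^ k * ((1 - m) / 2) ^ (n - k)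

def cwW (β m : ℝ) (n k : ℕ) : ℝ :=
  n.choose k * (cwb m n k * Real.exp (β / (2 * n) * (2 * k - n - n * m) ^ 2))

def cwF (β m y : ℝ) : ℝ := cwD m y - β / 2 * (y - m) ^ 2

lemma cw_exp_klog (k : ℕ) (c : ℝ) (hc : 0 < c) :
    Real.exp (-(k * Real.log (k / c))) * (k : ℝ) ^ k = c ^ k := by
  rcases Nat.eq_zero_or_pos k with h | h
  · simp [h]
  · have hk : (0 : ℝ) < k := by exact_mod_cast h
    rw [← mul_neg, ← Real.log_inv, inv_div, Real.exp_nat_mul, Real.exp_log (by positivity),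
      ← mul_pow]
    congr 1
    field_simp

lemma cw_expD (m : ℝ) (hm : |m| < 1) (n k : ℕ) (hn : 0 < n) (hk : k ≤ n) :
    Real.exp (-(n * cwD m (2 * k / n - 1))) * ((k ^ k * (n - k) ^ (n - k) : ℕ) : ℝ) =
      (n : ℝ) ^ n * cwb m n k := by
  obtain ⟨m1, m2⟩ := abs_lt.1 hm
  have p1 : 0 < 1 + m := by linarith
  have p2 : 0 < 1 - m := by linarith
  have hn' : (0 : ℝ) < n := by exact_mod_cast hn
  have a1 := cw_exp_klog k (n * ((1 + m) / 2)) (by positivity)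
  have a2 := cw_exp_klog (n - k) (n * ((1 - m) / 2)) (by positivity)
  have e : -(n * cwD m (2 * k / n - 1)) =
      -(k * Real.log (k / (n * ((1 + m) / 2)))) +
      -((n - k : ℕ) * Real.log ((n - k : ℕ) / (n * ((1 - m) / 2)))) := by
    simp only [cwD]
    rw [Nat.cast_sub hk]
    have e1 : (1 + (2 * (k : ℝ) / n - 1)) / (1 + m) = k / (n * ((1 + m) / 2)) := by
      field_simp; ring
    have e2 : (1 - (2 * (k : ℝ) / n - 1)) / (1 - m) = (n - k) / (n * ((1 - m) / 2)) := by
      field_simp; ring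
    rw [e1, e2]
    generalize Real.log _ = A
    generalize Real.log _ = B
    field_simp
    ring
  rw [e, Real.exp_add, Nat.cast_mul, Nat.cast_pow, Nat.cast_pow]
  rw [mul_mul_mul_comm, a1, a2, mul_pow, mul_pow, cwb]
  rw [mul_mul_mul_comm, ← pow_add, Nat.add_sub_cancel' hk]

lemma cw_K_pos (n k : ℕ) : 0 < ((k ^ k * (n - k) ^ (n - k) : ℕ) : ℝ) := by
  have h : ∀ j : ℕ, 0 < j ^ j := fun j => by
    rcases Nat.eq_zero_or_pos j with h | h
    · simp [h]
    · positivity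
  exact_mod_cast Nat.mul_pos (h k) (h _)

lemma cwb_pos (m : ℝ) (hm : |m| < 1) (n k : ℕ) : 0 < cwb m n k := by
  obtain ⟨m1, m2⟩ := abs_lt.1 hm
  have p1 : 0 < 1 + m := by linarith
  have p2 : 0 < 1 - m := by linarith
  unfold cwb; positivity

lemma cw_binom_le (m : ℝ) (hm : |m| < 1) (n k : ℕ) (hn : 0 < n) (hk : k ≤ n) :
    n.choose k * cwb m n k ≤ Real.exp (-(n * cwD m (2 * k / n - 1))) := by
  have h := cw_expD m hm n k hn hk
  have hK := cw_K_pos n k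
  have hb := cwb_pos m hm n k
  have hc : (n.choose k : ℝ) * ((k ^ k * (n - k) ^ (n - k) : ℕ) : ℝ) ≤ (n : ℝ) ^ n := by
    exact_mod_cast cw_choose_le n k hk
  refine le_of_mul_le_mul_right ?_ hK
  rw [h]
  calc _ = (n.choose k * ((k ^ k * (n - k) ^ (n - k) : ℕ) : ℝ)) * cwb m n k := by ring
    _ ≤ _ := by gcongr

lemma cw_le_binom (m : ℝ) (hm : |m| < 1) (n k : ℕ) (hn : 0 < n) (hk : k ≤ n) :
    Real.exp (-(n * cwD m (2 * k / n - 1))) ≤ (n + 1) * (n.choose k * cwb m n k) := by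
  have h := cw_expD m hm n k hn hk
  have hK := cw_K_pos n k
  have hb := cwb_pos m hm n k
  have hc : (n : ℝ) ^ n ≤
      (n + 1) * ((n.choose k : ℝ) * ((k ^ k * (n - k) ^ (n - k) : ℕ) : ℝ)) := by
    exact_mod_cast cw_le_choose n k hk
  refine le_of_mul_le_mul_right ?_ hK
  rw [h]
  calc _ ≤ ((n + 1) * ((n.choose k : ℝ) * ((k ^ k * (n - k) ^ (n - k) : ℕ) : ℝ))) * cwb m n k := by
        gcongr
    _ = _ := by ring

lemma cw_quad (β m : ℝ) (n k : ℕ) (hn : 0 < n) :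
    β / (2 * n) * (2 * k - n - n * m) ^ 2 = n * (β / 2 * (2 * k / n - 1 - m) ^ 2) := by
  have hn' : (0 : ℝ) < n := by exact_mod_cast hn
  field_simp

lemma cw_expF (β m : ℝ) (n k : ℕ) (hn : 0 < n) :
    Real.exp (-(n * cwF β m (2 * k / n - 1))) = Real.exp (-(n * cwD m (2 * k / n - 1))) *
      Real.exp (β / (2 * n) * (2 * k - n - n * m) ^ 2) := by
  rw [cw_quad β m n k hn, ← Real.exp_add, cwF]
  congr 1; ring

lemma cwW_le (β m : ℝ) (hm : |m| < 1) (n k : ℕ) (hn : 0 < n) (hk : k ≤ n) :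
    cwW β m n k ≤ Real.exp (-(n * cwF β m (2 * k / n - 1))) := by
  rw [cw_expF β m n k hn, cwW, ← mul_assoc]
  gcongr
  exact cw_binom_le m hm n k hn hk

lemma cw_le_W (β m : ℝ) (hm : |m| < 1) (n k : ℕ) (hn : 0 < n) (hk : k ≤ n) :
    Real.exp (-(n * cwF β m (2 * k / n - 1))) ≤ (n + 1) * cwW β m n k := by
  rw [cw_expF β m n k hn, cwW, ← mul_assoc (n.choose k : ℝ), ← mul_assoc]
  gcongr
  exact cw_le_binom m hm n k hn hk

lemma cwW_nonneg (β m : ℝ) (hm : |m| < 1) (n k : ℕ) : 0 ≤ cwW β m n k := by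
  have := cwb_pos m hm n k
  unfold cwW; positivity

def cwZ (β m : ℝ) (n : ℕ) : ℝ := ∑ k ∈ Finset.range (n + 1), cwW β m n k

lemma cwZ_ge (β m : ℝ) (hβ : 0 < β) (hm : |m| < 1) (n : ℕ) : 1 ≤ cwZ β m n := by
  have h1 : (1 : ℝ) = ∑ k ∈ Finset.range (n + 1), n.choose k * cwb m n k := by
    have h := add_pow ((1 + m) / 2) ((1 - m) / 2) n
    rw [show (1 + m) / 2 + (1 - m) / 2 = 1 by ring, one_pow] at h
    rw [h]
    refine Finset.sum_congr rfl fun k _ => ?_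
    rw [cwb]; ring
  rw [h1, cwZ]
  refine Finset.sum_le_sum fun k _ => ?_
  rw [cwW]
  have := cwb_pos m hm n k
  gcongr
  apply le_mul_of_one_le_right this.le
  apply Real.one_le_exp
  positivity

lemma cwZ_le (β m : ℝ) (hm : |m| < 1) (hF : ∀ y, |y| ≤ 1 → 0 ≤ cwF β m y) (n : ℕ) (hn : 0 < n) :
    cwZ β m n ≤ n + 1 := by
  have hn' : (0 : ℝ) < n := by exact_mod_cast hn
  have : cwZ β m n ≤ ∑ k ∈ Finset.range (n + 1), (1 : ℝ) := by
    refine Finset.sum_le_sum fun k hk => ?_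
    have hk' : k ≤ n := by have := Finset.mem_range.1 hk; omega
    have hk'' : (k : ℝ) ≤ n := by exact_mod_cast hk'
    refine (cwW_le β m hm n k hn hk').trans ?_
    rw [Real.exp_le_one_iff, neg_nonpos]
    refine mul_nonneg hn'.le (hF _ (abs_le.2 ⟨?_, ?_⟩))
    · have : 0 ≤ 2 * (k : ℝ) / n := by positivity
      linarith
    · have : 2 * (k : ℝ) / n ≤ 2 := by rw [div_le_iff₀ hn']; linarith
      linarith
  simpa using this

/-! configurations -/

def cwcnt {n : ℕ} (σ : Fin n → Bool) : ℕ := (Finset.univ.filter fun i => σ i = true).card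

lemma cw_mag {n : ℕ} (σ : Fin n → Bool) : mag σ = 2 * (cwcnt σ : ℝ) - n := by
  have h : ∀ i, spin (σ i) = 2 * (if σ i = true then (1 : ℝ) else 0) - 1 := by
    intro i; unfold spin; split_ifs <;> norm_num
  simp only [mag, h, cwcnt]
  rw [Finset.sum_sub_distrib, ← Finset.mul_sum, Finset.sum_boole]
  simp

lemma cwcnt_le {n : ℕ} (σ : Fin n → Bool) : cwcnt σ ≤ n := by
  unfold cwcnt
  refine (Finset.card_filter_le _ _).trans ?_
  simp

lemma cw_sum_cnt (n : ℕ) (g : ℕ → ℝ) :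
    ∑ σ : Fin n → Bool, g (cwcnt σ) = ∑ k ∈ Finset.range (n + 1), n.choose k * g k := by
  have h := Finset.sum_powerset_apply_card g (x := (Finset.univ : Finset (Fin n)))
  simp only [Finset.card_univ, Fintype.card_fin, nsmul_eq_mul] at h
  rw [← h]
  refine Finset.sum_bij' (fun σ _ => Finset.univ.filter fun i => σ i = true)
    (fun s _ i => decide (i ∈ s)) ?_ ?_ ?_ ?_ ?_
  · intro σ _; simp
  · intro s _; simp
  · intro σ _; funext i; simp
  · intro s _; ext i; simp
  · intro σ _; rfl

lemma cw_weight (β h m : ℝ) (hm : m = Real.tanh (β * (m + h))) (n : ℕ) (hn : 0 < n)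
    (σ : Fin n → Bool) :
    gibbsWeight β (fun _ => h) n σ =
      (Real.exp (-(n * (β * m ^ 2 / 2))) * (2 * Real.cosh (β * (m + h))) ^ n) *
      (cwb m n (cwcnt σ) *
        Real.exp (β / (2 * n) * (2 * (cwcnt σ : ℝ) - n - n * m) ^ 2)) := by
  have hn' : (0 : ℝ) < n := by exact_mod_cast hn
  have hk := cwcnt_le σ
  set k := cwcnt σ with hkdef
  set T := β * (m + h) with hT
  have hc := Real.cosh_pos T
  have e1 : (1 + m) / 2 * (2 * Real.cosh T) = Real.exp T := by
    rw [← Real.cosh_add_sinh, hm, Real.tanh_eq_sinh_div_cosh]; field_simp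
  have e2 : (1 - m) / 2 * (2 * Real.cosh T) = Real.exp (-T) := by
    rw [← Real.cosh_sub_sinh, hm, Real.tanh_eq_sinh_div_cosh]; field_simp
  have e3 : (2 * Real.cosh T) ^ n * cwb m n k = Real.exp (T * (2 * k - n)) := by
    calc _ = ((1 + m) / 2 * (2 * Real.cosh T)) ^ k *
          ((1 - m) / 2 * (2 * Real.cosh T)) ^ (n - k) := by
          conv_lhs => rw [← Nat.add_sub_cancel' hk, pow_add, Nat.add_sub_cancel' hk]
          rw [cwb, mul_pow ((1 + m) / 2), mul_pow ((1 - m) / 2)]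
          generalize 2 * Real.cosh T = c
          generalize (1 + m) / 2 = p
          generalize (1 - m) / 2 = q
          ring
      _ = _ := by
          rw [e1, e2, ← Real.exp_nat_mul, ← Real.exp_nat_mul, ← Real.exp_add, Nat.cast_sub hk]
          congr 1; ring
  have e4 : ∑ i : Fin n, h * spin (σ i) = h * (2 * k - n) := by
    rw [← Finset.mul_sum, ← cw_mag σ]; rfl
  have e5 : Real.exp (-(n * (β * m ^ 2 / 2))) * (2 * Real.cosh T) ^ n *
      (cwb m n k * Real.exp (β / (2 * n) * (2 * (k : ℝ) - n - n * m) ^ 2)) =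
      Real.exp (-(n * (β * m ^ 2 / 2))) * ((2 * Real.cosh T) ^ n * cwb m n k) *
      Real.exp (β / (2 * n) * (2 * (k : ℝ) - n - n * m) ^ 2) := by ring
  rw [e5, e3, ← Real.exp_add, ← Real.exp_add, gibbsWeight, e4, cw_mag σ, ← hkdef, hT]
  congr 1
  field_simp
  ring

open Classical in
lemma cw_prob (β h m : ℝ) (hm : m = Real.tanh (β * (m + h))) (n : ℕ) (hn : 0 < n)
    (α : ℝ) (C : Set ℝ) (hC : MeasurableSet C) :
    ((gibbsMeasure β (fun _ => h) n).map (fun σ => (mag σ - n * m) / (n : ℝ) ^ α)) C =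
    ENNReal.ofReal ((∑ k ∈ Finset.range (n + 1),
      if (2 * (k : ℝ) - n - n * m) / (n : ℝ) ^ α ∈ C then cwW β m n k else 0) / cwZ β m n) := by
  have hm1 : |m| < 1 := by rw [hm]; exact Real.abs_tanh_lt_one _
  set K := Real.exp (-(n * (β * m ^ 2 / 2))) * (2 * Real.cosh (β * (m + h))) ^ n with hK
  have hKp : 0 < K := by
    have := Real.cosh_pos (β * (m + h)); positivity
  have hw := fun σ => cw_weight β h m hm n hn σ
  rw [Measure.map_apply (Measurable.of_discrete) hC, gibbsMeasure]
  have hpos : ∀ σ : Fin n → Bool, 0 < gibbsWeight β (fun _ => h) n σ :=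
    fun σ => Real.exp_pos _
  have hZ : ∑ σ : Fin n → Bool, gibbsWeight β (fun _ => h) n σ = K * cwZ β m n := by
    simp only [hw, ← hK]
    rw [← Finset.mul_sum, cw_sum_cnt n (fun k => cwb m n k *
        Real.exp (β / (2 * n) * (2 * (k : ℝ) - n - n * m) ^ 2))]
    rfl
  have hN : (∑ σ : Fin n → Bool, ENNReal.ofReal (gibbsWeight β (fun _ => h) n σ) •
      Measure.dirac σ) ((fun σ => (mag σ - n * m) / (n : ℝ) ^ α) ⁻¹' C) =
      ENNReal.ofReal (K * ∑ k ∈ Finset.range (n + 1),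
      if (2 * (k : ℝ) - n - n * m) / (n : ℝ) ^ α ∈ C then cwW β m n k else 0) := by
    rw [Measure.finsetSum_apply]
    have : ∀ σ : Fin n → Bool, (ENNReal.ofReal (gibbsWeight β (fun _ => h) n σ) •
      Measure.dirac σ) ((fun σ => (mag σ - n * m) / (n : ℝ) ^ α) ⁻¹' C) =
      ENNReal.ofReal (K * (if (2 * (cwcnt σ : ℝ) - n - n * m) / (n : ℝ) ^ α ∈ C then
        (cwb m n (cwcnt σ) *
        Real.exp (β / (2 * n) * (2 * (cwcnt σ : ℝ) - n - n * m) ^ 2)) else 0)) := by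
      intro σ
      rw [Measure.smul_apply, Measure.dirac_apply' _ (MeasurableSet.of_discrete), smul_eq_mul,
        Set.indicator_apply]
      simp only [Set.mem_preimage, cw_mag, Pi.one_apply]
      split_ifs with hc
      · rw [mul_one, hw]
      · simp
    simp only [this]
    rw [← ENNReal.ofReal_sum_of_nonneg, ← Finset.mul_sum,
      cw_sum_cnt n (fun k => if (2 * (k : ℝ) - n - n * m) / (n : ℝ) ^ α ∈ C then
        (cwb m n k * Real.exp (β / (2 * n) * (2 * (k : ℝ) - n - n * m) ^ 2)) else 0)]
    · congr 2
      refine Finset.sum_congr rfl fun k _ => ?_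
      split_ifs
      · rfl
      · simp
    · intro σ _
      have := cwb_pos m hm1 n (cwcnt σ)
      split_ifs <;> positivity
  have hZp : 0 < K * cwZ β m n := by
    rw [← hZ]
    exact Finset.sum_pos (fun σ _ => hpos σ) Finset.univ_nonempty
  rw [Measure.smul_apply, hN, hZ, smul_eq_mul, ← ENNReal.ofReal_inv_of_pos hZp,
    ← ENNReal.ofReal_mul (inv_nonneg.2 hZp.le)]
  congr 1
  have : 0 < cwZ β m n := pos_of_mul_pos_right hZp hKp.le
  field_simp

/-! extended logarithm -/

lemma cw_le_elog (p : ℝ≥0∞) (A : ℝ) (h : ENNReal.ofReal (Real.exp A) ≤ p) :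
    (A : EReal) ≤ elog p := by
  have h0 : p ≠ 0 := by
    intro h0
    rw [h0] at h
    have := ENNReal.ofReal_eq_zero.1 (le_antisymm h bot_le)
    linarith [Real.exp_pos A]
  unfold elog
  rw [if_neg h0]
  split_ifs with h1
  · exact le_top
  · rw [EReal.coe_le_coe_iff]
    rw [Real.le_log_iff_exp_le (ENNReal.toReal_pos h0 h1)]
    exact (ENNReal.ofReal_le_iff_le_toReal h1).1 h

lemma cw_elog_le (p : ℝ≥0∞) (A : ℝ) (h : p ≤ ENNReal.ofReal (Real.exp A)) :
    elog p ≤ (A : EReal) := by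
  unfold elog
  split_ifs with h0 h1
  · exact bot_le
  · rw [h1] at h; simp at h
  · rw [EReal.coe_le_coe_iff, Real.log_le_iff_le_exp (ENNReal.toReal_pos h0 h1)]
    exact ENNReal.toReal_le_of_le_ofReal (Real.exp_pos A).le h

lemma cw_scale_le (a A B : ℝ) (x : EReal) (ha : 0 < a) (h : (A : EReal) ≤ x) (hB : B * a ≤ A) :
    (B : EReal) ≤ ((a⁻¹ : ℝ) : EReal) * x := by
  calc (B : EReal) ≤ ((a⁻¹ * A : ℝ) : EReal) := by
        rw [EReal.coe_le_coe_iff, inv_mul_eq_div, le_div_iff₀ ha]; exact hB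
    _ = ((a⁻¹ : ℝ) : EReal) * (A : EReal) := EReal.coe_mul _ _
    _ ≤ _ := by
        apply mul_le_mul_of_nonneg_left h
        exact_mod_cast (inv_pos.2 ha).le

lemma cw_le_scale (a A B : ℝ) (x : EReal) (ha : 0 < a) (h : x ≤ (A : EReal)) (hB : A ≤ B * a) :
    ((a⁻¹ : ℝ) : EReal) * x ≤ (B : EReal) := by
  calc _ ≤ ((a⁻¹ : ℝ) : EReal) * (A : EReal) := by
        apply mul_le_mul_of_nonneg_left h
        exact_mod_cast (inv_pos.2 ha).le
    _ = ((a⁻¹ * A : ℝ) : EReal) := (EReal.coe_mul _ _).symm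
    _ ≤ (B : EReal) := by
        rw [EReal.coe_le_coe_iff, inv_mul_eq_div, div_le_iff₀ ha]; exact hB

lemma cw_log_small (γ : ℝ) (hγ : 0 < γ) (ε : ℝ) (hε : 0 < ε) :
    ∀ᶠ n : ℕ in atTop, Real.log (n + 1) ≤ ε * (n : ℝ) ^ γ := by
  have h := (isLittleO_log_rpow_atTop hγ).def (show 0 < ε / 2 ^ γ by positivity)
  have ht : Tendsto (fun n : ℕ => (n : ℝ) + 1) atTop atTop :=
    tendsto_atTop_add_const_right _ _ tendsto_natCast_atTop_atTop
  filter_upwards [ht.eventually h, eventually_ge_atTop 1] with n hn h1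
  have h1' : (1 : ℝ) ≤ n := by exact_mod_cast h1
  have h2 : ((n : ℝ) + 1) ^ γ ≤ 2 ^ γ * (n : ℝ) ^ γ := by
    rw [← Real.mul_rpow (by norm_num) (by linarith)]
    apply Real.rpow_le_rpow (by linarith) (by linarith) hγ.le
  rw [Real.norm_eq_abs, Real.norm_eq_abs, abs_of_nonneg (Real.rpow_nonneg (by linarith) γ)] at hn
  calc _ ≤ _ := le_abs_self _
    _ ≤ _ := hn
    _ ≤ ε / 2 ^ γ * (2 ^ γ * (n : ℝ) ^ γ) := by gcongr
    _ = _ := by field_simp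

/-! bounds on probabilities -/

lemma cw_yk (n k : ℕ) (hn : 0 < n) (hk : k ≤ n) : |2 * (k : ℝ) / n - 1| ≤ 1 := by
  have hn' : (0 : ℝ) < n := by exact_mod_cast hn
  have hk'' : (k : ℝ) ≤ n := by exact_mod_cast hk
  refine abs_le.2 ⟨?_, ?_⟩
  · have : 0 ≤ 2 * (k : ℝ) / n := by positivity
    linarith
  · have : 2 * (k : ℝ) / n ≤ 2 := by rw [div_le_iff₀ hn']; linarith
    linarith

lemma cw_prob_le (β h m : ℝ) (hβ : 0 < β) (hm : m = Real.tanh (β * (m + h))) (n : ℕ) (hn : 0 < n)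
    (α : ℝ) (C : Set ℝ) (hC : MeasurableSet C) (L : ℝ)
    (hL : ∀ k ≤ n, (2 * (k : ℝ) - n - n * m) / (n : ℝ) ^ α ∈ C →
      L ≤ n * cwF β m (2 * k / n - 1)) :
    ((gibbsMeasure β (fun _ => h) n).map (fun σ => (mag σ - n * m) / (n : ℝ) ^ α)) C ≤
    ENNReal.ofReal (Real.exp (Real.log (n + 1) - L)) := by
  classical
  have hm1 : |m| < 1 := by rw [hm]; exact Real.abs_tanh_lt_one _
  rw [cw_prob β h m hm n hn α C hC]
  apply ENNReal.ofReal_le_ofReal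
  have hZ := cwZ_ge β m hβ hm1 n
  rw [div_le_iff₀ (by linarith), Real.exp_sub, Real.exp_log (by positivity), div_eq_mul_inv,
    ← Real.exp_neg]
  have h1 : (∑ k ∈ Finset.range (n + 1),
      if (2 * (k : ℝ) - n - n * m) / (n : ℝ) ^ α ∈ C then cwW β m n k else 0) ≤
      ∑ k ∈ Finset.range (n + 1), Real.exp (-L) := by
    refine Finset.sum_le_sum fun k hk => ?_
    have hk' : k ≤ n := by have := Finset.mem_range.1 hk; omega
    split_ifs with hc
    · refine (cwW_le β m hm1 n k hn hk').trans ?_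
      rw [Real.exp_le_exp, neg_le_neg_iff]
      exact hL k hk' hc
    · positivity
  refine h1.trans ?_
  rw [Finset.sum_const, Finset.card_range, nsmul_eq_mul]
  push_cast
  exact le_mul_of_one_le_right (by positivity) hZ

lemma cw_prob_le_one (β h m : ℝ) (hβ : 0 < β) (hm : m = Real.tanh (β * (m + h))) (n : ℕ)
    (hn : 0 < n) (α : ℝ) (C : Set ℝ) (hC : MeasurableSet C) :
    ((gibbsMeasure β (fun _ => h) n).map (fun σ => (mag σ - n * m) / (n : ℝ) ^ α)) C ≤
    ENNReal.ofReal (Real.exp 0) := by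
  classical
  have hm1 : |m| < 1 := by rw [hm]; exact Real.abs_tanh_lt_one _
  rw [cw_prob β h m hm n hn α C hC]
  apply ENNReal.ofReal_le_ofReal
  have hZ := cwZ_ge β m hβ hm1 n
  rw [div_le_iff₀ (by linarith), Real.exp_zero, one_mul, cwZ]
  refine Finset.sum_le_sum fun k hk => ?_
  split_ifs with hc
  · exact le_rfl
  · exact cwW_nonneg β m hm1 n k

lemma cw_le_prob (β h m : ℝ) (hβ : 0 < β) (hm : m = Real.tanh (β * (m + h))) (n : ℕ) (hn : 0 < n)
    (hF : ∀ y, |y| ≤ 1 → 0 ≤ cwF β m y)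
    (α : ℝ) (C : Set ℝ) (hC : MeasurableSet C) (k : ℕ) (hk : k ≤ n)
    (hkC : (2 * (k : ℝ) - n - n * m) / (n : ℝ) ^ α ∈ C) (L : ℝ)
    (hL : n * cwF β m (2 * k / n - 1) ≤ L) :
    ENNReal.ofReal (Real.exp (-L - 2 * Real.log (n + 1))) ≤
    ((gibbsMeasure β (fun _ => h) n).map (fun σ => (mag σ - n * m) / (n : ℝ) ^ α)) C := by
  classical
  have hm1 : |m| < 1 := by rw [hm]; exact Real.abs_tanh_lt_one _
  rw [cw_prob β h m hm n hn α C hC]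
  apply ENNReal.ofReal_le_ofReal
  have hZ := cwZ_ge β m hβ hm1 n
  have hZ2 := cwZ_le β m hm1 hF n hn
  have hn1 : (0 : ℝ) < n + 1 := by positivity
  have hW := cw_le_W β m hm1 n k hn hk
  have h1 : cwW β m n k ≤ ∑ k ∈ Finset.range (n + 1),
      if (2 * (k : ℝ) - n - n * m) / (n : ℝ) ^ α ∈ C then cwW β m n k else 0 := by
    have := Finset.single_le_sum (f := fun k : ℕ =>
      if (2 * (k : ℝ) - n - n * m) / (n : ℝ) ^ α ∈ C then cwW β m n k else 0)
      (s := Finset.range (n + 1)) (fun j _ => by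
        split_ifs
        · exact cwW_nonneg β m hm1 n j
        · exact le_rfl) (Finset.mem_range.2 (by omega : k < n + 1))
    simpa only [if_pos hkC] using this
  have e : Real.exp (-L - 2 * Real.log (n + 1)) = Real.exp (-L) / (n + 1) ^ 2 := by
    rw [Real.exp_sub, two_mul, Real.exp_add, Real.exp_log hn1, sq]
  have h2 : Real.exp (-L) ≤ (n + 1) * cwW β m n k :=
    (Real.exp_le_exp.2 (neg_le_neg hL)).trans hW
  have h3 := cwW_nonneg β m hm1 n k
  rw [e, le_div_iff₀ (by linarith)]
  calc Real.exp (-L) / (n + 1) ^ 2 * cwZ β m n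
      ≤ ((n + 1) * cwW β m n k) / (n + 1) ^ 2 * (n + 1) := by gcongr
    _ = cwW β m n k := by field_simp
    _ ≤ _ := h1

lemma cw_xk (m α : ℝ) (n k : ℕ) (hn : 0 < n) :
    (n : ℝ) * (2 * k / n - 1 - m) ^ 2 =
      ((2 * (k : ℝ) - n - n * m) / (n : ℝ) ^ α) ^ 2 * (n : ℝ) ^ (2 * α - 1) := by
  have hn' : (0 : ℝ) < n := by exact_mod_cast hn
  have h1 : (n : ℝ) ^ (2 * α - 1) = ((n : ℝ) ^ α) ^ 2 / n := by
    rw [Real.rpow_sub hn', Real.rpow_one, two_mul, Real.rpow_add hn', sq]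
  have : 0 < (n : ℝ) ^ α := by positivity
  rw [h1]
  field_simp

/-- the properties of `F` used -/
structure cwGood (β m s : ℝ) : Prop where
  nn : ∀ y, |y| ≤ 1 → 0 ≤ cwF β m y
  loc : ∃ M > 0, ∃ r > 0, ∀ y, |y - m| < r →
    |cwF β m y - s * (y - m) ^ 2| ≤ M * |y - m| ^ 3
  far : ∀ r > 0, ∃ δ > 0, ∀ y, |y| ≤ 1 → r ≤ |y - m| → δ ≤ cwF β m y

lemma cw_good (β h m : ℝ) (hm : m = Real.tanh (β * (m + h)))
    (hmin : ∀ x, x ≠ m → cwg β h m < cwg β h x) :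
    cwGood β m ((1 - β * (1 - m ^ 2)) / (2 * (1 - m ^ 2))) := by
  have hm1 : |m| < 1 := by rw [hm]; exact Real.abs_tanh_lt_one _
  refine ⟨fun y hy => ?_, ?_, fun r hr => ?_⟩
  · refine le_trans ?_ (cw_F_ge β h m y hm hy)
    by_cases hym : y = m
    · simp [hym]
    · linarith [hmin y hym]
  · obtain ⟨M, hM, r, hr, hy⟩ := cw_local m hm1
    refine ⟨M, hM, r, hr, fun y h1 => ?_⟩
    convert hy y h1 using 2
    have : 0 < 1 - m ^ 2 := by
      have := (sq_lt_one_iff_abs_lt_one m).2 hm1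
      linarith
    rw [cwF]
    field_simp
    ring
  · have hgc : Continuous (cwg β h) :=
      continuous_iff_continuousAt.2 fun x => (cwg_hasDerivAt β h x).continuousAt
    have hK : IsCompact (Set.Icc (-1 : ℝ) 1 ∩ {y | r ≤ |y - m|}) :=
      isCompact_Icc.inter_right (isClosed_le continuous_const (by fun_prop))
    rcases Set.eq_empty_or_nonempty (Set.Icc (-1 : ℝ) 1 ∩ {y | r ≤ |y - m|}) with he | hne
    · refine ⟨1, one_pos, fun y hy hyr => ?_⟩
      have : y ∈ Set.Icc (-1 : ℝ) 1 ∩ {y | r ≤ |y - m|} := ⟨abs_le.1 hy, hyr⟩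
      rw [he] at this
      exact this.elim
    · obtain ⟨z, hz, hzmin⟩ := hK.exists_isMinOn hne hgc.continuousOn
      have hzm : z ≠ m := by
        rintro rfl
        have := hz.2
        simp at this
        linarith
      refine ⟨cwg β h z - cwg β h m, by linarith [hmin z hzm], fun y hy hyr => ?_⟩
      have h1 : cwg β h z ≤ cwg β h y := hzmin ⟨abs_le.1 hy, hyr⟩
      have h2 : cwg β h y - cwg β h m ≤ cwF β m y := cw_F_ge β h m y hm hy
      linarith

lemma cw_upper (β h m s : ℝ) (hβ : 0 < β) (hs : 0 < s) (hm : m = Real.tanh (β * (m + h)))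
    (hg : cwGood β m s)
    (α : ℝ) (hα2 : α < 1) (C : Set ℝ) (hC : MeasurableSet C) (b b2 : ℝ)
    (hb : 0 ≤ b) (hb2 : b < b2) (hCb : ∀ x ∈ C, b2 ≤ s * x ^ 2) :
    ∀ᶠ n : ℕ in atTop,
    ((gibbsMeasure β (fun _ => h) n).map (fun σ => (mag σ - n * m) / (n : ℝ) ^ α)) C ≤
    ENNReal.ofReal (Real.exp (Real.log (n + 1) - b * (n : ℝ) ^ (2 * α - 1))) := by
  obtain ⟨M, hM, r, hr, hloc⟩ := hg.loc
  have hb2' : 0 < b2 := by linarith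
  have hrat : 0 < s * (1 - b / b2) := by
    have : b / b2 < 1 := (div_lt_one hb2').2 hb2
    apply mul_pos hs; linarith
  set r' := min r (s * (1 - b / b2) / M) with hr'
  obtain ⟨δ, hδ, hfar⟩ := hg.far r' (by positivity)
  have ht : Tendsto (fun n : ℕ => b * (n : ℝ) ^ (-(2 - 2 * α))) atTop (𝓝 (b * 0)) :=
    ((tendsto_rpow_neg_atTop (show 0 < 2 - 2 * α by linarith)).comp
      tendsto_natCast_atTop_atTop).const_mul b
  rw [mul_zero] at ht
  filter_upwards [ht.eventually (gt_mem_nhds hδ), eventually_gt_atTop 0] with n hnδ hn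
  have hn' : (0 : ℝ) < n := by exact_mod_cast hn
  refine cw_prob_le β h m hβ hm n hn α C hC _ fun k hk hkC => ?_
  set y := 2 * (k : ℝ) / n - 1 with hy
  have hxk := cw_xk m α n k hn
  rw [← hy] at hxk
  have hCk := hCb _ hkC
  set x := (2 * (k : ℝ) - n - n * m) / (n : ℝ) ^ α with hx
  rcases lt_or_ge (|y - m|) r' with hlt | hge
  · obtain ⟨h1, h2⟩ := lt_min_iff.1 hlt
    have h3 := (abs_le.1 (hloc y h1)).1
    have h4 : M * |y - m| ≤ s * (1 - b / b2) := by
      rw [lt_div_iff₀ hM] at h2; linarith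
    have h5 : M * |y - m| ^ 3 ≤ s * (1 - b / b2) * (y - m) ^ 2 := by
      rw [← sq_abs (y - m), pow_succ']
      calc M * (|y - m| * |y - m| ^ 2) = (M * |y - m|) * |y - m| ^ 2 := by ring
        _ ≤ _ := by gcongr
    have h6 : b / b2 * s * (y - m) ^ 2 ≤ cwF β m y := by nlinarith
    calc b * (n : ℝ) ^ (2 * α - 1) = b / b2 * b2 * (n : ℝ) ^ (2 * α - 1) := by field_simp
      _ ≤ b / b2 * (s * x ^ 2) * (n : ℝ) ^ (2 * α - 1) := by gcongr
      _ = b / b2 * s * (x ^ 2 * (n : ℝ) ^ (2 * α - 1)) := by ring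
      _ = n * (b / b2 * s * (y - m) ^ 2) := by rw [← hxk]; ring
      _ ≤ _ := by gcongr
  · have h1 := hfar y (cw_yk n k hn hk) hge
    have h2 : (n : ℝ) ^ (2 * α - 1) = n * (n : ℝ) ^ (-(2 - 2 * α)) := by
      rw [show 2 * α - 1 = 1 + -(2 - 2 * α) by ring, Real.rpow_add hn', Real.rpow_one]
    rw [h2]
    calc b * (n * (n : ℝ) ^ (-(2 - 2 * α))) = n * (b * (n : ℝ) ^ (-(2 - 2 * α))) := by ring
      _ ≤ n * δ := by gcongr
      _ ≤ _ := by gcongr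

lemma cw_lower (β h m s : ℝ) (hβ : 0 < β) (hm : m = Real.tanh (β * (m + h)))
    (hg : cwGood β m s)
    (α : ℝ) (hα : 1 / 2 < α) (hα2 : α < 1) (C : Set ℝ) (hC : MeasurableSet C) (x A : ℝ)
    (hx : x ∈ interior C) (hA : s * x ^ 2 < A) :
    ∀ᶠ n : ℕ in atTop,
    ENNReal.ofReal (Real.exp (-(A * (n : ℝ) ^ (2 * α - 1)) - 2 * Real.log (n + 1))) ≤
    ((gibbsMeasure β (fun _ => h) n).map (fun σ => (mag σ - n * m) / (n : ℝ) ^ α)) C := by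
  have hm1 : |m| < 1 := by rw [hm]; exact Real.abs_tanh_lt_one _
  obtain ⟨m1, m2⟩ := abs_lt.1 hm1
  obtain ⟨M, hM, r, hr, hloc⟩ := hg.loc
  set z : ℕ → ℝ := fun n => (n + n * m + x * (n : ℝ) ^ α) / 2 with hz
  set k : ℕ → ℕ := fun n => ⌊z n⌋₊ with hk
  set X : ℕ → ℝ := fun n => (2 * (k n : ℝ) - n - n * m) / (n : ℝ) ^ α with hX
  have hd0 : Tendsto (fun n : ℕ => (n : ℝ) ^ (-(1 - α))) atTop (𝓝 0) :=
    (tendsto_rpow_neg_atTop (show 0 < 1 - α by linarith)).comp tendsto_natCast_atTop_atTop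
  have hd1 : Tendsto (fun n : ℕ => (n : ℝ) ^ (-α)) atTop (𝓝 0) :=
    (tendsto_rpow_neg_atTop (show 0 < α by linarith)).comp tendsto_natCast_atTop_atTop
  have hsplit : ∀ n : ℕ, 0 < n → (n : ℝ) ^ α = n * (n : ℝ) ^ (-(1 - α)) := by
    intro n hn
    have hn' : (0 : ℝ) < n := by exact_mod_cast hn
    conv_rhs => rw [← Real.rpow_one_add' hn'.le (by linarith)]
    congr 1; ring
  have hz0 : ∀ᶠ n : ℕ in atTop, 0 ≤ z n ∧ z n ≤ n := by
    have ht : Tendsto (fun n : ℕ => x * (n : ℝ) ^ (-(1 - α))) atTop (𝓝 (x * 0)) := hd0.const_mul x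
    rw [mul_zero] at ht
    filter_upwards [ht.eventually (gt_mem_nhds (show 0 < 1 - m by linarith)),
      ht.eventually (lt_mem_nhds (show -(1 + m) < 0 by linarith)), eventually_gt_atTop 0]
      with n h1 h2 hn
    have hn' : (0 : ℝ) < n := by exact_mod_cast hn
    have e : z n = n * ((1 + m + x * (n : ℝ) ^ (-(1 - α))) / 2) := by
      simp only [hz]; rw [hsplit n hn]; ring
    rw [e]
    constructor
    · apply mul_nonneg hn'.le; linarith
    · apply mul_le_of_le_one_right hn'.le; linarith
  have hXx : Tendsto X atTop (𝓝 x) := by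
    rw [tendsto_iff_dist_tendsto_zero]
    have ht : Tendsto (fun n : ℕ => 2 * (n : ℝ) ^ (-α)) atTop (𝓝 (2 * 0)) := hd1.const_mul 2
    rw [mul_zero] at ht
    refine tendsto_of_tendsto_of_tendsto_of_le_of_le' tendsto_const_nhds ht
      (Eventually.of_forall fun n => dist_nonneg) ?_
    filter_upwards [hz0, eventually_gt_atTop 0] with n h1 hn
    have hn' : (0 : ℝ) < n := by exact_mod_cast hn
    have hp : 0 < (n : ℝ) ^ α := by positivity
    have h2 := Nat.floor_le h1.1
    have h3 := Nat.lt_floor_add_one (z n)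
    have e : X n - x = 2 * ((k n : ℝ) - z n) * (n : ℝ) ^ (-α) := by
      simp only [hX, hz]
      rw [Real.rpow_neg hn'.le]
      field_simp
      ring
    rw [Real.dist_eq, e, abs_mul, abs_mul, abs_two, abs_of_nonneg (Real.rpow_nonneg hn'.le _)]
    have : |(k n : ℝ) - z n| ≤ 1 := by
      simp only [hk]
      exact abs_le.2 ⟨by linarith, by linarith⟩
    gcongr
    linarith
  have hyX : ∀ n : ℕ, 0 < n → 2 * (k n : ℝ) / n - 1 - m = X n * (n : ℝ) ^ (-(1 - α)) := by
    intro n hn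
    have hn' : (0 : ℝ) < n := by exact_mod_cast hn
    have hp : 0 < (n : ℝ) ^ α := by positivity
    have e : (n : ℝ) ^ (-(1 - α)) = (n : ℝ) ^ α / n := by
      rw [hsplit n hn]; field_simp
    simp only [hX]
    rw [e]
    field_simp
  have ht0 : Tendsto (fun n => X n * (n : ℝ) ^ (-(1 - α))) atTop (𝓝 0) := by
    simpa using hXx.mul hd0
  have ht1 : Tendsto (fun n => |X n * (n : ℝ) ^ (-(1 - α))|) atTop (𝓝 0) := by
    simpa using ht0.abs
  have ht2 : Tendsto (fun n => (s + M * |X n * (n : ℝ) ^ (-(1 - α))|) * X n ^ 2) atTop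
      (𝓝 (s * x ^ 2)) := by
    simpa using ((ht1.const_mul M).const_add s).mul (hXx.pow 2)
  have hC' : ∀ᶠ n in atTop, X n ∈ C := hXx.eventually (mem_interior_iff_mem_nhds.1 hx)
  filter_upwards [hz0, hC', ht1.eventually (gt_mem_nhds hr), ht2.eventually (gt_mem_nhds hA),
    eventually_gt_atTop 0] with n h1 h2 h3 h4 hn
  have hn' : (0 : ℝ) < n := by exact_mod_cast hn
  have hkn : k n ≤ n := by
    have := Nat.floor_le_floor h1.2
    rwa [Nat.floor_natCast] at this
  refine cw_le_prob β h m hβ hm n hn hg.nn α C hC (k n) hkn h2 _ ?_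
  have hxk := cw_xk m α n (k n) hn
  rw [← hyX n hn] at h3 h4
  change _ = X n ^ 2 * _ at hxk
  set y := 2 * (k n : ℝ) / n - 1 with hy
  have h5 := (abs_le.1 (hloc y h3)).2
  have h6 : cwF β m y ≤ (s + M * |y - m|) * (y - m) ^ 2 := by
    have : |y - m| ^ 3 = |y - m| * (y - m) ^ 2 := by
      rw [← sq_abs (y - m)]; ring
    rw [this] at h5
    linarith
  calc n * cwF β m y ≤ n * ((s + M * |y - m|) * (y - m) ^ 2) := by gcongr
    _ = (s + M * |y - m|) * (n * (y - m) ^ 2) := by ring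
    _ = ((s + M * |y - m|) * X n ^ 2) * (n : ℝ) ^ (2 * α - 1) := by rw [hxk]; ring
    _ ≤ _ := by gcongr

lemma cw_ldp (β h m s : ℝ) (hβ : 0 < β) (hs : 0 < s) (hm : m = Real.tanh (β * (m + h)))
    (hg : cwGood β m s) (α : ℝ) (hα : 1 / 2 < α) (hα2 : α < 1) :
    HasLDP
      (fun n => (gibbsMeasure β (fun _ => h) n).map
        (fun σ => (mag σ - n * m) / (n : ℝ) ^ α))
      (fun n => (n : ℝ) ^ (2 * α - 1))
      (fun x => ENNReal.ofReal (s * x ^ 2)) := by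
  have hcont : Continuous (fun x : ℝ => ENNReal.ofReal (s * x ^ 2)) :=
    ENNReal.continuous_ofReal.comp (by fun_prop)
  have hγ : 0 < 2 * α - 1 := by linarith
  have hI : ∀ x : ℝ, ((ENNReal.ofReal (s * x ^ 2) : ℝ≥0∞) : EReal) = ((s * x ^ 2 : ℝ) : EReal) := by
    intro x
    rw [EReal.coe_ennreal_ofReal, max_eq_left (by positivity)]
  refine ⟨hcont.lowerSemicontinuous, fun c => ?_, fun C hC => ⟨?_, ?_⟩⟩
  · refine Metric.isCompact_of_isClosed_isBounded (isClosed_le hcont continuous_const) ?_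
    refine (Metric.isBounded_Icc (-(max c 0 / s + 1)) (max c 0 / s + 1)).subset fun x hx => ?_
    have h0 : 0 ≤ max c 0 := le_max_right _ _
    have h1 : s * x ^ 2 ≤ max c 0 := by
      have hx' : ENNReal.ofReal (s * x ^ 2) ≤ ENNReal.ofReal (max c 0) :=
        (show ENNReal.ofReal (s * x ^ 2) ≤ ENNReal.ofReal c from hx).trans
          (ENNReal.ofReal_le_ofReal (le_max_left _ _))
      exact (ENNReal.ofReal_le_ofReal_iff h0).1 hx'
    have h2 : x ^ 2 ≤ max c 0 / s := by rw [le_div_iff₀ hs]; linarith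
    have h3 : 0 ≤ max c 0 / s := by positivity
    exact abs_le.1 (abs_le_of_sq_le_sq (by nlinarith) (by linarith))
  · rw [EReal.neg_le]
    refine le_iInf₂ fun x hx => ?_
    rw [hI, EReal.neg_le]
    refine le_of_forall_lt fun c hc => ?_
    obtain ⟨B, hcB, hB⟩ := EReal.lt_iff_exists_real_btwn.1 hc
    refine hcB.trans_le ?_
    have hB' : B < -(s * x ^ 2) := by exact_mod_cast hB
    obtain ⟨A, hA1, hA2⟩ := exists_between (show s * x ^ 2 < -B by linarith)
    refine le_liminf_of_le (by isBoundedDefault) ?_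
    filter_upwards [cw_lower β h m s hβ hm hg α hα hα2 C hC x A hx hA1,
      cw_log_small (2 * α - 1) hγ ((-B - A) / 2) (by linarith), eventually_gt_atTop 0]
      with n h1 h2 hn
    have hn' : (0 : ℝ) < n := by exact_mod_cast hn
    refine cw_scale_le _ _ _ _ (by positivity) (cw_le_elog _ _ h1) ?_
    nlinarith
  · refine le_of_forall_gt fun c hc => ?_
    obtain ⟨B, hB, hcB⟩ := EReal.lt_iff_exists_real_btwn.1 hc
    refine lt_of_le_of_lt ?_ hcB
    refine limsup_le_of_le (by isBoundedDefault) ?_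
    rcases le_or_gt 0 B with hB0 | hB0
    · filter_upwards [eventually_gt_atTop 0] with n hn
      have hn' : (0 : ℝ) < n := by exact_mod_cast hn
      exact cw_le_scale _ _ _ _ (by positivity)
        (cw_elog_le _ _ (cw_prob_le_one β h m hβ hm n hn α C hC)) (by positivity)
    · obtain ⟨B2, hB1, hB2⟩ := EReal.lt_iff_exists_real_btwn.1 hB
      have hB2' : B2 < B := by exact_mod_cast hB2
      have hCb : ∀ x ∈ C, -B2 ≤ s * x ^ 2 := by
        intro x hx
        have h1 : (⨅ x ∈ closure C, ((ENNReal.ofReal (s * x ^ 2) : ℝ≥0∞) : EReal)) ≤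
            ((s * x ^ 2 : ℝ) : EReal) := by
          rw [← hI]
          exact iInf₂_le x (subset_closure hx)
        have h2 := (EReal.neg_le_neg_iff.2 h1).trans_lt hB1
        have h3 : -(s * x ^ 2) < B2 := by exact_mod_cast h2
        linarith
      filter_upwards [cw_upper β h m s hβ hs hm hg α hα2 C hC ((-B - B2) / 2) (-B2)
        (by linarith) (by linarith) hCb,
        cw_log_small (2 * α - 1) hγ ((B - B2) / 2) (by linarith), eventually_gt_atTop 0]
        with n h1 h2 hn
      have hn' : (0 : ℝ) < n := by exact_mod_cast hn
      refine cw_le_scale _ _ _ _ (by positivity) (cw_elog_le _ _ h1) ?_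
      nlinarith

/-- MDP for the classical Curie-Weiss model with external field
(Example 4.1 of the paper). -/
theorem curie_weiss_external_field
    (β : ℝ) (hβ : 0 < β) (hf : ℝ) (hhf : hf ≠ 0)
    (m : ℝ) (hm : m = Real.tanh (β * (m + hf))) (hsgn : Real.sign m = Real.sign hf)
    (huniq : ∀ x : ℝ, x = Real.tanh (β * (x + hf)) →
      Real.sign x = Real.sign hf → x = m) :
    (∀ x : ℝ, x ≠ m →
        G β (Measure.dirac hf) m < G β (Measure.dirac hf) x) ∧
      IsMinOfType β (Measure.dirac hf) m 1 (β - β ^ 2 * (1 - m ^ 2)) ∧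
      ∀ α : ℝ, 1 / 2 < α → α < 1 →
        HasLDP
          (fun n => (gibbsMeasure β (fun _ => hf) n).map
            (fun σ => (mag σ - n * m) / (n : ℝ) ^ α))
          (fun n => (n : ℝ) ^ (2 * α - 1))
          (fun x => ENNReal.ofReal
            (x ^ 2 / (2 * ((1 - m ^ 2) / (1 - β * (1 - m ^ 2)))))) := by
  obtain ⟨h1, h2⟩ := cw_all β hf m hβ hhf hm hsgn
  refine ⟨?_, cw_minType β hf m hβ hm h2, fun α hα hα2 => ?_⟩
  · rw [cw_G_eq]; exact h1
  · have hm1 : |m| < 1 := by rw [hm]; exact Real.abs_tanh_lt_one _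
    have hm2 : 0 < 1 - m ^ 2 := by
      have := (sq_lt_one_iff_abs_lt_one m).2 hm1
      linarith
    have hs : 0 < (1 - β * (1 - m ^ 2)) / (2 * (1 - m ^ 2)) :=
      div_pos (by linarith) (by linarith)
    have key := cw_ldp β hf m _ hβ hs hm (cw_good β hf m hm h1) α hα hα2
    have e : (fun x : ℝ => ENNReal.ofReal
        (x ^ 2 / (2 * ((1 - m ^ 2) / (1 - β * (1 - m ^ 2)))))) =
        fun x : ℝ => ENNReal.ofReal ((1 - β * (1 - m ^ 2)) / (2 * (1 - m ^ 2)) * x ^ 2) := by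
      funext x
      congr 1
      have : 1 - β * (1 - m ^ 2) ≠ 0 := by linarith
      field_simp
    rw [e]
    exact key
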